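/- arXiv:1405.6618 — 2 statements merged into one kernel-verified Lean document; each statement's English description precedes it below -/
import Mathlib

section
/- For every nonnegative integer n and complex number x with 6x-1 != 0 and 3x-1 != 0: sum over k from 0 to n of ((3x)_k (1-3x)_k (-n)_k)/(k! (3/2)_k (-1-3n)_k) * (3/4)^k equals (3x/(6x-1)) * ((1+x)_n (1-x)_n)/((2/3)_n (4/3)_n) + ((3x-1)/(6x-1)) * ((2/3+x)_n (4/3-x)_n)/((2/3)_n (4/3)_n). -/
/-- Pochhammer symbol (rising factorial) `(a)_k`. -/
noncomputable def poch (a : ℂ) (k : ℕ) : ℂ := ∏ j ∈ Finset.range k, (a + j)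

theorem poch_succ (a : ℂ) (k : ℕ) : poch a (k + 1) = poch a k * (a + k) :=
  Finset.prod_range_succ _ _

theorem poch_zero (a : ℂ) : poch a 0 = 1 := Finset.prod_range_zero _

theorem poch_succ_left (a : ℂ) (k : ℕ) : poch a (k + 1) = a * poch (a + 1) k := by
  simp only [poch, Finset.prod_range_succ', Nat.cast_zero, add_zero, Nat.cast_add, Nat.cast_one]
  rw [mul_comm]
  congr 1
  exact Finset.prod_congr rfl fun j _ => by ring

/-- The summand of Gosper's strange sum
`∑ (1+3y)_k (1-3y)_k (-n)_k / (k! (3/2)_k (-1-3n)_k) (3/4)^k`. -/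
noncomputable def gosperTerm (y : ℂ) (n k : ℕ) : ℂ :=
  (poch (1 + 3*y) k * poch (1 - 3*y) k * poch (-(n : ℂ)) k) /
    ((Nat.factorial k : ℂ) * poch (3/2) k * poch (-1 - 3*n : ℂ) k) * (3/4 : ℂ)^k

theorem gosperTerm_zero (y : ℂ) (n : ℕ) : gosperTerm y n 0 = 1 := by
  simp [gosperTerm, poch_zero]

theorem gosperTerm_succ (y : ℂ) (n k : ℕ) :
    gosperTerm y n (k + 1) = gosperTerm y n k *
      (((1 + k + 3*y) * (1 + k - 3*y) * (k - n) * 3) /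
        ((k + 1) * (3/2 + k) * (k - 1 - 3*n) * 4)) := by
  simp only [gosperTerm, poch_succ, Nat.factorial_succ, pow_succ, Nat.cast_mul, Nat.cast_add,
    Nat.cast_one, div_eq_mul_inv, mul_inv]
  ring

open scoped ComplexOrder

theorem gosperTerm_succ_left (y : ℂ) (k d : ℕ) :
    gosperTerm y (k + d + 1) k = gosperTerm y (k + d) k *
      (((k + d + 1) * (2*k + 3*d + 2) * (2*k + 3*d + 3) * (2*k + 3*d + 4)) /
        ((d + 1) * (3*k + 3*d + 2) * (3*k + 3*d + 3) * (3*k + 3*d + 4))) := by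
  induction k generalizing d with
  | zero =>
    simp only [gosperTerm_zero, Nat.cast_zero, mul_zero, zero_add, one_mul]
    rw [div_self]
    positivity
  | succ k ih =>
    have ih' := ih (d + 1)
    have e1 : k + 1 + d + 1 = k + (d + 1) + 1 := by ring
    have e2 : k + 1 + d = k + (d + 1) := by ring
    rw [e1, e2, gosperTerm_succ, gosperTerm_succ, ih']
    push_cast
    rw [show (k : ℂ) - 1 - 3*(k + (d + 1) + 1) = -(2*k + 3*d + 7) by ring,
      show (k : ℂ) - 1 - 3*(k + (d + 1)) = -(2*k + 3*d + 4) by ring,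
      show (k : ℂ) - (k + (d + 1) + 1) = -(d + 2) by ring,
      show (k : ℂ) - (k + (d + 1)) = -(d + 1) by ring]
    field_simp
    ring

/-- Partial sums of the creative telescoping relation for `gosperTerm`. -/
theorem sum_gosperTerm_telescope (y : ℂ) (m d : ℕ) :
    ∑ k ∈ Finset.range (m + 1), (gosperTerm y (m + d + 1) k
        - ((1 + y + (m + d)) * (1 - y + (m + d)) / ((2/3 + (m + d)) * (4/3 + (m + d))))
          * gosperTerm y (m + d) k)
      = -((1 + m)^2 - 9*y^2) / ((3*m + 3*d + 2) * (3*m + 3*d + 4)) * gosperTerm y (m + d) m := by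
  induction m generalizing d with
  | zero =>
    simp only [zero_add, Finset.sum_range_one, gosperTerm_zero, Nat.cast_zero, mul_zero, mul_one]
    field_simp
    ring
  | succ m ih =>
    have ih' := ih (d + 1)
    have e1 : m + 1 + d + 1 = m + (d + 1) + 1 := by ring
    have e2 : m + 1 + d = m + (d + 1) := by ring
    have key := gosperTerm_succ_left y (m + 1) d
    rw [e1, e2] at key
    have e3 : ((m + 1 : ℕ) : ℂ) + d = m + ((d + 1 : ℕ) : ℂ) := by push_cast; ring
    rw [e1, e2, e3, Finset.sum_range_succ, ih', key, gosperTerm_succ]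
    push_cast
    rw [show (m : ℂ) - 1 - 3*(m + (d + 1)) = -(2*m + 3*d + 4) by ring,
      show (m : ℂ) - (m + (d + 1)) = -(d + 1) by ring,
      show (4/3 + ((m : ℂ) + (d + 1))) = (3*m + 3*d + 7)/3 by ring]
    field_simp
    ring

theorem sum_gosperTerm_succ (y : ℂ) (n : ℕ) :
    ∑ k ∈ Finset.range (n + 2), gosperTerm y (n + 1) k
      = ((1 + y + n) * (1 - y + n) / ((2/3 + n) * (4/3 + n)))
        * ∑ k ∈ Finset.range (n + 1), gosperTerm y n k := by
  have h := sum_gosperTerm_telescope y n 0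
  have key := gosperTerm_succ_left y n 0
  simp only [Nat.cast_zero, add_zero, mul_zero, zero_add, one_mul] at h key
  rw [Finset.sum_sub_distrib, ← Finset.mul_sum, sub_eq_iff_eq_add] at h
  rw [Finset.sum_range_succ, h, gosperTerm_succ, key]
  push_cast
  rw [show (n : ℂ) - 1 - 3*(n + 1) = -(2*(n + 2)) by ring,
    show (n : ℂ) - (n + 1) = -1 by ring]
  rw [add_right_comm, add_eq_right]
  field_simp
  ring

/-- Gosper's strange evaluation. -/
theorem sum_gosperTerm (y : ℂ) (n : ℕ) :
    ∑ k ∈ Finset.range (n + 1), gosperTerm y n k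
      = (poch (1 + y) n * poch (1 - y) n) / (poch (2/3) n * poch (4/3) n) := by
  induction n with
  | zero => simp [gosperTerm_zero, poch_zero]
  | succ n ih =>
    rw [sum_gosperTerm_succ, ih, div_mul_div_comm]
    simp only [poch_succ]
    congr 1 <;> ring

theorem poch_mul_poch_contiguous (a : ℂ) (k : ℕ) :
    a * (poch (1 + a) k * poch (1 - a) k) + (a - 1) * (poch a k * poch (2 - a) k)
      = (2*a - 1) * (poch a k * poch (1 - a) k) := by
  have h1 : a * poch (1 + a) k = poch a k * (a + k) := by
    rw [← poch_succ, poch_succ_left, add_comm 1 a]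
  have h2 : (1 - a) * poch (2 - a) k = poch (1 - a) k * (1 - a + k) := by
    rw [← poch_succ, poch_succ_left, show 1 - a + 1 = 2 - a by ring]
  linear_combination poch (1 - a) k * h1 - poch a k * h2

theorem gosper_second_ext_ell_one (n : ℕ) (x : ℂ)
    (h6x : 6*x - 1 ≠ 0) (h3x : 3*x - 1 ≠ 0) :
    ∑ k ∈ Finset.range (n+1),
      (poch (3*x) k * poch (1 - 3*x) k * poch (-(n : ℂ)) k) /
        ((Nat.factorial k : ℂ) * poch (3/2) k * poch (-1 - 3*n : ℂ) k) * (3/4 : ℂ)^k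
      = 3*x / (6*x - 1) * ((poch (1 + x) n * poch (1 - x) n) / (poch (2/3) n * poch (4/3) n))
        + (3*x - 1) / (6*x - 1) *
            ((poch (2/3 + x) n * poch (4/3 - x) n) / (poch (2/3) n * poch (4/3) n)) := by
  have hA := sum_gosperTerm x n
  have hB := sum_gosperTerm (x - 1/3) n
  rw [show 1 + (x - 1/3) = 2/3 + x by ring, show 1 - (x - 1/3) = 4/3 - x by ring] at hB
  rw [← hA, ← hB, Finset.mul_sum, Finset.mul_sum, ← Finset.sum_add_distrib]
  refine Finset.sum_congr rfl fun k _ => ?_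
  have h := poch_mul_poch_contiguous (3*x) k
  simp only [gosperTerm]
  rw [show 1 + 3*(x - 1/3) = 3*x by ring, show 1 - 3*(x - 1/3) = 2 - 3*x by ring]
  rw [div_mul_eq_mul_div (3*x), div_mul_eq_mul_div (3*x - 1), ← add_div, eq_div_iff h6x]
  linear_combination (-(poch (-(n : ℂ)) k /
    ((Nat.factorial k : ℂ) * poch (3/2) k * poch (-1 - 3*n : ℂ) k) * (3/4 : ℂ)^k)) * h
end

section
/- For a nonnegative integer ℓ, nonnegative integer n, and complex numbers q, x with no vanishing denominators: sum over k from 0 to n of (q^{-3n};q^3)_k * (x;q)_k (q^{-ℓ}/x;q)_k / ((q;q)_k (-1;q)_k (q^{1/2-ℓ};q)_k (-q^{1/2};q)_k (q^{-3n};q)_k) * q^k equals [(qx;q)_ℓ (q^{1/2}x;q)_ℓ / ((qx^2;q)_ℓ (q^{1/2};q)_ℓ)] times the sum over i from 0 to ℓ of q^{(ℓ+1/2)i} * (1+xq^i)/(2(1+x)) * ((q^{-ℓ};q)_i (x^2;q)_i)/((q;q)_i (x^2 q^{ℓ+1};q)_i) * [ ((q^{1+i}x;q^3)_n (q^{2-i}/x;q^3)_n)/((q;q^3)_n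 (q^2;q^3)_n) + ((q^{2+i}x;q^3)_n (q^{1-i}/x;q^3)_n)/((q;q^3)_n (q^2;q^3)_n) ]. -/
/-- q-Pochhammer symbol `(a; q)_k`. -/
noncomputable def qpoch (a q : ℂ) (k : ℕ) : ℂ := ∏ j ∈ Finset.range k, (1 - a * q ^ j)

open Finset

theorem qpoch_zero (a q : ℂ) : qpoch a q 0 = 1 := by simp [qpoch]

theorem qpoch_succ (a q : ℂ) (k : ℕ) : qpoch a q (k + 1) = qpoch a q k * (1 - a * q ^ k) := by
  simp [qpoch, prod_range_succ]

theorem qpoch_succ' (a q : ℂ) (k : ℕ) : qpoch a q (k + 1) = (1 - a) * qpoch (a * q) q k := by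
  simp only [qpoch, prod_range_succ', pow_zero, mul_one]
  rw [mul_comm]
  congr 1
  exact prod_congr rfl fun j _ => by ring

theorem one_sub_mul_qpoch (a q : ℂ) (k : ℕ) :
    (1 - a) * qpoch (a * q) q k = qpoch a q k * (1 - a * q ^ k) := by
  rw [← qpoch_succ', qpoch_succ]

theorem qpoch_ne_zero {a q : ℂ} {k : ℕ} (h : ∀ j < k, a * q ^ j ≠ 1) : qpoch a q k ≠ 0 :=
  prod_ne_zero_iff.2 fun j hj => sub_ne_zero.2 (h j (mem_range.1 hj)).symm

theorem qpoch_inv_pow_ne_zero {q : ℂ} (hq : q ≠ 0) (hg : ∀ j : ℕ, j ≠ 0 → q ^ j ≠ 1) {m k : ℕ}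
    (hk : k ≤ m) : qpoch (q ^ m)⁻¹ q k ≠ 0 := by
  refine qpoch_ne_zero fun j hj h => hg (m - j) (by omega) ?_
  have h1 : q ^ m = q ^ (m - j) * q ^ j := by rw [← pow_add]; congr 1; omega
  have h2 := mul_inv_cancel₀ (pow_ne_zero m hq)
  have h3 : q ^ j = q ^ m := by linear_combination q ^ m * h - q ^ j * h2
  rw [h3] at h1
  exact mul_right_cancel₀ (pow_ne_zero m hq) (by rw [← h1, one_mul])

/-- Summand of the terminating cubic sum, with `v = q ^ (-3 n)` and `x * y = q`. -/
noncomputable def cubicTerm (q v x y : ℂ) (k : ℕ) : ℂ :=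
  qpoch v (q ^ 3) k / qpoch v q k * (qpoch x q k * qpoch y q k) / qpoch q q (2 * k) * q ^ k

theorem cubicTerm_zero (q v x y : ℂ) : cubicTerm q v x y 0 = 1 := by simp [cubicTerm, qpoch_zero]

theorem cubicTerm_succ (q v x y : ℂ) (k : ℕ) :
    cubicTerm q v x y (k + 1) = cubicTerm q v x y k *
      ((1 - v * (q ^ k) ^ 3) / (1 - v * q ^ k) * (q * (1 - x * q ^ k) * (1 - y * q ^ k)) /
        ((1 - q * (q ^ k) ^ 2) * (1 - q ^ 2 * (q ^ k) ^ 2))) := by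
  have h1 : qpoch q q (2 * (k + 1)) =
      qpoch q q (2 * k) * ((1 - q * (q ^ k) ^ 2) * (1 - q ^ 2 * (q ^ k) ^ 2)) := by
    rw [show 2 * (k + 1) = 2 * k + 1 + 1 by ring, qpoch_succ, qpoch_succ]
    ring
  simp only [cubicTerm, h1, qpoch_succ]
  rw [show (q ^ 3) ^ k = (q ^ k) ^ 3 by ring, pow_succ q k]
  simp only [div_eq_mul_inv, mul_inv]
  ring

theorem cubicTerm_succ_shift {q v : ℂ} (x y : ℂ) (k : ℕ) (hq : q ≠ 0)
    (h1 : 1 - v / q ≠ 0) (h2 : 1 - v / q ^ 2 ≠ 0)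
    (hv : qpoch v q k ≠ 0) (hv' : qpoch (v / q ^ 3) q (k + 1) ≠ 0) :
    cubicTerm q (v / q ^ 3) x y (k + 1) = cubicTerm q v x y k *
      ((1 - v * q ^ k / q) * (1 - v * q ^ k / q ^ 2) / ((1 - v / q) * (1 - v / q ^ 2)) *
        (q * (1 - x * q ^ k) * (1 - y * q ^ k)) /
        ((1 - q * (q ^ k) ^ 2) * (1 - q ^ 2 * (q ^ k) ^ 2))) := by
  have e1 : qpoch q q (2 * (k + 1)) =
      qpoch q q (2 * k) * ((1 - q * (q ^ k) ^ 2) * (1 - q ^ 2 * (q ^ k) ^ 2)) := by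
    rw [show 2 * (k + 1) = 2 * k + 1 + 1 by ring, qpoch_succ, qpoch_succ]
    ring
  have e2 : qpoch (v / q ^ 3) (q ^ 3) (k + 1) = (1 - v / q ^ 3) * qpoch v (q ^ 3) k := by
    rw [qpoch_succ', div_mul_cancel₀ _ (pow_ne_zero 3 hq)]
  have e3 : qpoch (v / q ^ 3) q (k + 1) * ((1 - v * q ^ k / q) * (1 - v * q ^ k / q ^ 2)) =
      (1 - v / q ^ 3) * ((1 - v / q) * (1 - v / q ^ 2)) * qpoch v q k := by
    have a1 : qpoch (v / q ^ 3) q (k + 3) =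
        qpoch (v / q ^ 3) q (k + 1) * ((1 - v * q ^ k / q) * (1 - v * q ^ k / q ^ 2)) := by
      rw [qpoch_succ, qpoch_succ, mul_assoc]
      congr 1
      have b1 : v / q ^ 3 * q ^ (k + 1) = v * q ^ k / q ^ 2 := by field_simp; ring
      have b2 : v / q ^ 3 * q ^ (k + 2) = v * q ^ k / q := by field_simp; ring
      rw [b1, b2, mul_comm]
    rw [← a1, qpoch_succ', qpoch_succ', qpoch_succ',
      show v / q ^ 3 * q = v / q ^ 2 by field_simp, show v / q ^ 2 * q = v / q by field_simp,
      div_mul_cancel₀ _ hq]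
    ring
  have e4 : (qpoch v q k)⁻¹ * ((1 - v * q ^ k / q) * (1 - v * q ^ k / q ^ 2) *
      ((1 - v / q) * (1 - v / q ^ 2))⁻¹) =
      (1 - v / q ^ 3) * (qpoch (v / q ^ 3) q (k + 1))⁻¹ := by
    have hne : (1 - v / q) * (1 - v / q ^ 2) ≠ 0 := mul_ne_zero h1 h2
    generalize (1 - v / q) * (1 - v / q ^ 2) = d at *
    generalize (1 - v * q ^ k / q) * (1 - v * q ^ k / q ^ 2) = e at *
    generalize (1 - v / q ^ 3) = g at *
    rw [← mul_assoc, ← div_eq_mul_inv, ← div_eq_mul_inv, inv_mul_eq_div,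
      div_div, div_eq_div_iff (mul_ne_zero hv hne) hv']
    linear_combination e3
  simp only [cubicTerm, e1, e2, qpoch_succ x, qpoch_succ y]
  rw [pow_succ q k]
  simp only [div_eq_mul_inv _ (qpoch _ _ _), div_eq_mul_inv _ ((1 - v / q) * (1 - v / q ^ 2)),
    div_eq_mul_inv _ ((1 - q * (q ^ k) ^ 2) * (1 - q ^ 2 * (q ^ k) ^ 2)),
    div_eq_mul_inv _ (qpoch q q (2 * k) * ((1 - q * (q ^ k) ^ 2) * (1 - q ^ 2 * (q ^ k) ^ 2))),
    mul_inv (qpoch q q (2 * k))]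
  linear_combination (-(qpoch v (q ^ 3) k * (qpoch x q k * (1 - x * q ^ k) *
    (qpoch y q k * (1 - y * q ^ k))) * (qpoch q q (2 * k))⁻¹ *
    ((1 - q * (q ^ k) ^ 2) * (1 - q ^ 2 * (q ^ k) ^ 2))⁻¹ * (q ^ k * q))) * e4

theorem cubic_ratio_shift {q u : ℂ} (Q : ℂ) (hq : q ≠ 0) (hu : u ≠ 0)
    (h1 : 1 - q * u ≠ 0) (h2 : 1 - q ^ 2 * u ≠ 0) :
    (1 - q * u) * (1 - q ^ 2 * u) *
        ((1 - u⁻¹ * Q / q) * (1 - u⁻¹ * Q / q ^ 2) / ((1 - u⁻¹ / q) * (1 - u⁻¹ / q ^ 2))) =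
      (q * u - Q) * (q ^ 2 * u - Q) := by
  have a1 : 1 - u⁻¹ / q = -(1 - q * u) / (q * u) := by field_simp; ring
  have a2 : 1 - u⁻¹ / q ^ 2 = -(1 - q ^ 2 * u) / (q ^ 2 * u) := by field_simp; ring
  rw [a1, a2]
  field_simp

theorem cubic_certificate {q u Q x y : ℂ} (hu : u ≠ 0) (hQ : Q ≠ 0) (hxy : x * y = q)
    (hC : (1 - q * Q ^ 2) * (1 - q ^ 2 * Q ^ 2) ≠ 0) (hE : u - Q ≠ 0) :
    (q * u - Q) * (q ^ 2 * u - Q) *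
          (q * (1 - x * Q) * (1 - y * Q)) / ((1 - q * Q ^ 2) * (1 - q ^ 2 * Q ^ 2)) -
        (1 - q * u * x) * (1 - q * u * y) *
          ((1 - u⁻¹ * Q ^ 3) / (1 - u⁻¹ * Q) * (q * (1 - x * Q) * (1 - y * Q)) /
            ((1 - q * Q ^ 2) * (1 - q ^ 2 * Q ^ 2))) =
      q * u / Q * ((1 - x * Q) * (1 - y * Q)) -
        (1 - u⁻¹ * Q ^ 3) / (1 - u⁻¹ * Q) * (q * (1 - x * Q) * (1 - y * Q)) /
            ((1 - q * Q ^ 2) * (1 - q ^ 2 * Q ^ 2)) * (u / Q) *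
          ((1 - x * (Q * q)) * (1 - y * (Q * q))) := by
  have hr : (1 - u⁻¹ * Q ^ 3) / (1 - u⁻¹ * Q) = (u - Q ^ 3) / (u - Q) := by
    have : 1 - u⁻¹ * Q ≠ 0 := by
      intro h
      apply hE
      linear_combination u * h + Q * mul_inv_cancel₀ hu
    rw [div_eq_div_iff this hE]
    field_simp
  have key : (q * u - Q) * (q ^ 2 * u - Q)
      - (u - Q ^ 3) / (u - Q) * ((1 - q * u * x) * (1 - q * u * y))
      + (u - Q ^ 3) / (u - Q) * (u / Q) * ((1 - x * (Q * q)) * (1 - y * (Q * q))) =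
      u / Q * ((1 - q * Q ^ 2) * (1 - q ^ 2 * Q ^ 2)) := by
    subst hxy
    field_simp
    ring
  rw [hr]
  generalize (1 - q * Q ^ 2) * (1 - q ^ 2 * Q ^ 2) = C at *
  have hCC : C * C⁻¹ = 1 := mul_inv_cancel₀ hC
  generalize (u - Q ^ 3) / (u - Q) = r at *
  simp only [div_eq_mul_inv] at *
  linear_combination (q * ((1 - x * Q) * (1 - y * Q)) * C⁻¹) * key +
    (q * ((1 - x * Q) * (1 - y * Q)) * (u * Q⁻¹)) * hCC

theorem cubicTerm_telescope {q x y : ℂ} (hq : q ≠ 0) (hg : ∀ j : ℕ, j ≠ 0 → q ^ j ≠ 1)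
    (hxy : x * y = q) (n K : ℕ) (hK : K ≤ n) :
    ∑ k ∈ range (K + 1),
      ((1 - q * q ^ (3 * n)) * (1 - q ^ 2 * q ^ (3 * n)) *
          cubicTerm q ((q ^ (3 * n))⁻¹ / q ^ 3) x y k -
        (1 - q * q ^ (3 * n) * x) * (1 - q * q ^ (3 * n) * y) *
          cubicTerm q (q ^ (3 * n))⁻¹ x y k) =
      -cubicTerm q (q ^ (3 * n))⁻¹ x y K * (q * q ^ (3 * n) / q ^ K) *
        ((1 - x * q ^ K) * (1 - y * q ^ K)) := by
  have hu : q ^ (3 * n) ≠ 0 := pow_ne_zero _ hq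
  have hN1 : 1 - q * q ^ (3 * n) ≠ 0 := by
    rw [← pow_succ']; exact sub_ne_zero.2 (hg _ (by omega)).symm
  have hN2 : 1 - q ^ 2 * q ^ (3 * n) ≠ 0 := by
    rw [← pow_add]; exact sub_ne_zero.2 (hg _ (by omega)).symm
  have hinv : ∀ m : ℕ, m ≠ 0 → 1 - (q ^ (3 * n))⁻¹ / q ^ m ≠ 0 := by
    intro m hm h
    refine hg (3 * n + m) (by omega) ?_
    rw [← inv_eq_one, pow_add, mul_inv, ← div_eq_mul_inv]
    exact (sub_eq_zero.1 h).symm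
  have hC : ∀ k : ℕ, (1 - q * (q ^ k) ^ 2) * (1 - q ^ 2 * (q ^ k) ^ 2) ≠ 0 := by
    intro k
    refine mul_ne_zero (sub_ne_zero.2 fun h => hg (1 + k * 2) (by omega) ?_)
      (sub_ne_zero.2 fun h => hg (2 + k * 2) (by omega) ?_)
    · rw [h]; ring
    · rw [h]; ring
  induction K with
  | zero =>
    simp only [zero_add, sum_range_one, cubicTerm_zero, pow_zero]
    linear_combination (q * q ^ (3 * n) - q ^ 2 * (q ^ (3 * n)) ^ 2) * hxy
  | succ K ih =>
    have hv3 : (q ^ (3 * n))⁻¹ / q ^ 3 = (q ^ (3 * (n + 1)))⁻¹ := by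
      rw [mul_add, mul_one, pow_add, mul_inv, div_eq_mul_inv]
    have hE : q ^ (3 * n) - q ^ K ≠ 0 := by
      intro h
      refine hg (3 * n - K) (by omega) ?_
      have h1 : q ^ (3 * n) = q ^ (3 * n - K) * q ^ K := by rw [← pow_add]; congr 1; omega
      exact mul_right_cancel₀ (pow_ne_zero K hq) (by rw [← h1, one_mul, sub_eq_zero.1 h])
    rw [sum_range_succ, ih (by omega), cubicTerm_succ_shift x y K hq (by simpa using hinv 1 (by omega))
      (hinv 2 (by omega)) (qpoch_inv_pow_ne_zero hq hg (by omega))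
      (by rw [hv3]; exact qpoch_inv_pow_ne_zero hq hg (by omega)), cubicTerm_succ, pow_succ q K]
    have h1 := cubic_ratio_shift (q ^ K) hq hu hN1 hN2
    have h2 := cubic_certificate hu (pow_ne_zero K hq) hxy (hC K) hE
    rw [← h1] at h2
    have h3 : q * q ^ (3 * n) / (q ^ K * q) = q ^ (3 * n) / q ^ K := by field_simp
    rw [h3]
    linear_combination cubicTerm q (q ^ (3 * n))⁻¹ x y K * h2

theorem cubicTerm_sum_succ {q x y : ℂ} (hq : q ≠ 0) (hg : ∀ j : ℕ, j ≠ 0 → q ^ j ≠ 1)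
    (hxy : x * y = q) (n : ℕ) :
    (1 - q * q ^ (3 * n)) * (1 - q ^ 2 * q ^ (3 * n)) *
        ∑ k ∈ range (n + 2), cubicTerm q (q ^ (3 * (n + 1)))⁻¹ x y k =
      (1 - q * q ^ (3 * n) * x) * (1 - q * q ^ (3 * n) * y) *
        ∑ k ∈ range (n + 1), cubicTerm q (q ^ (3 * n))⁻¹ x y k := by
  have hu : q ^ (3 * n) ≠ 0 := pow_ne_zero _ hq
  have hN1 : 1 - q * q ^ (3 * n) ≠ 0 := by
    rw [← pow_succ']; exact sub_ne_zero.2 (hg _ (by omega)).symm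
  have hN2 : 1 - q ^ 2 * q ^ (3 * n) ≠ 0 := by
    rw [← pow_add]; exact sub_ne_zero.2 (hg _ (by omega)).symm
  have hinv : ∀ m : ℕ, m ≠ 0 → 1 - (q ^ (3 * n))⁻¹ / q ^ m ≠ 0 := by
    intro m hm h
    refine hg (3 * n + m) (by omega) ?_
    rw [← inv_eq_one, pow_add, mul_inv, ← div_eq_mul_inv]
    exact (sub_eq_zero.1 h).symm
  have hC : (1 - q * (q ^ n) ^ 2) * (1 - q ^ 2 * (q ^ n) ^ 2) ≠ 0 := by
    refine mul_ne_zero (sub_ne_zero.2 fun h => hg (1 + n * 2) (by omega) ?_)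
      (sub_ne_zero.2 fun h => hg (2 + n * 2) (by omega) ?_)
    · rw [h]; ring
    · rw [h]; ring
  have hv3 : (q ^ (3 * n))⁻¹ / q ^ 3 = (q ^ (3 * (n + 1)))⁻¹ := by
    rw [mul_add, mul_one, pow_add, mul_inv, div_eq_mul_inv]
  have h0 := cubicTerm_telescope hq hg hxy n n le_rfl
  rw [sum_sub_distrib, ← mul_sum, ← mul_sum] at h0
  rw [sum_range_succ, ← hv3, cubicTerm_succ_shift x y n hq (by simpa using hinv 1 (by omega))
      (hinv 2 (by omega)) (qpoch_inv_pow_ne_zero hq hg (by omega))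
      (by rw [hv3]; exact qpoch_inv_pow_ne_zero hq hg (by omega))]
  have h1 := cubic_ratio_shift (q ^ n) hq hu hN1 hN2
  have h2 : q ^ (3 * n) / q ^ n = (q ^ n) ^ 2 := by
    rw [div_eq_iff (pow_ne_zero n hq)]; ring
  have h3 : (q * q ^ (3 * n) - q ^ n) * (q ^ 2 * q ^ (3 * n) - q ^ n) *
      ((1 - q * (q ^ n) ^ 2) * (1 - q ^ 2 * (q ^ n) ^ 2))⁻¹ = (q ^ n) ^ 2 := by
    rw [← div_eq_mul_inv, div_eq_iff hC, show q ^ (3 * n) = (q ^ n) ^ 3 by ring]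
    ring
  rw [← h1] at h3
  rw [mul_div_assoc, h2] at h0
  rw [div_eq_mul_inv _ ((1 - q * (q ^ n) ^ 2) * (1 - q ^ 2 * (q ^ n) ^ 2))]
  linear_combination h0 + cubicTerm q (q ^ (3 * n))⁻¹ x y n *
    (q * (1 - x * q ^ n) * (1 - y * q ^ n)) * h3

theorem cubicTerm_sum {q x y : ℂ} (hq : q ≠ 0) (hg : ∀ j : ℕ, j ≠ 0 → q ^ j ≠ 1)
    (hxy : x * y = q) (n : ℕ) :
    ∑ k ∈ range (n + 1), cubicTerm q (q ^ (3 * n))⁻¹ x y k =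
      qpoch (q * x) (q ^ 3) n * qpoch (q * y) (q ^ 3) n /
        (qpoch q (q ^ 3) n * qpoch (q ^ 2) (q ^ 3) n) := by
  induction n with
  | zero => simp [cubicTerm_zero, qpoch_zero]
  | succ n ih =>
    have hN1 : 1 - q * q ^ (3 * n) ≠ 0 := by
      rw [← pow_succ']; exact sub_ne_zero.2 (hg _ (by omega)).symm
    have hN2 : 1 - q ^ 2 * q ^ (3 * n) ≠ 0 := by
      rw [← pow_add]; exact sub_ne_zero.2 (hg _ (by omega)).symm
    have h := cubicTerm_sum_succ hq hg hxy n
    rw [ih, mul_comm, ← eq_div_iff (mul_ne_zero hN1 hN2)] at h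
    rw [h]
    simp only [qpoch_succ, ← pow_mul]
    simp only [div_eq_mul_inv, mul_inv]
    ring

theorem qpoch_two_mul (q s : ℂ) (hs : s ^ 2 = q) (k : ℕ) :
    qpoch q q k * qpoch (-1) q k * qpoch s q k * qpoch (-s) q k * (1 + q ^ k) =
      2 * qpoch q q (2 * k) := by
  induction k with
  | zero => simp [qpoch_zero]; norm_num
  | succ k ih =>
    rw [show 2 * (k + 1) = 2 * k + 1 + 1 by ring]
    simp only [qpoch_succ]
    subst hs
    linear_combination (1 - s ^ 2 * (s ^ 2) ^ (2 * k)) * (1 - s ^ 2 * (s ^ 2) ^ (2 * k + 1)) * ih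

theorem qpoch_mul_qpoch_symm {q x : ℂ} (hx : x ≠ 0) (hx1 : x ≠ 1) (k : ℕ) :
    qpoch x q k * qpoch (q / x) q k + qpoch (1 / x) q k * qpoch (q * x) q k =
      (1 + q ^ k) * (qpoch x q k * qpoch (1 / x) q k) := by
  have h1 := one_sub_mul_qpoch x q k
  have h2 := one_sub_mul_qpoch (1 / x) q k
  rw [show x * q = q * x by ring] at h1
  rw [show 1 / x * q = q / x by ring] at h2
  have hne : 1 - x ≠ 0 := sub_ne_zero.2 hx1.symm
  have hne' : 1 - 1 / x ≠ 0 := by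
    rw [sub_ne_zero]; intro h; apply hx1; field_simp at h; exact h
  rw [mul_comm, ← eq_div_iff hne] at h1
  rw [mul_comm, ← eq_div_iff hne'] at h2
  rw [h1, h2]
  have hne2 : x - 1 ≠ 0 := sub_ne_zero.2 hx1
  field_simp
  ring

theorem gosper_sum {q x s : ℂ} (hq : q ≠ 0) (hs : s ^ 2 = q)
    (hg : ∀ j : ℕ, j ≠ 0 → q ^ j ≠ 1) (hx : x ≠ 0) (hx1 : x ≠ 1) (n : ℕ) :
    ∑ k ∈ range (n + 1),
      qpoch (q ^ (3 * n))⁻¹ (q ^ 3) k / qpoch (q ^ (3 * n))⁻¹ q k *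
        (qpoch x q k * qpoch (1 / x) q k) /
        (qpoch q q k * qpoch (-1) q k * qpoch s q k * qpoch (-s) q k) * q ^ k =
      (qpoch (q * x) (q ^ 3) n * qpoch (q ^ 2 / x) (q ^ 3) n /
          (qpoch q (q ^ 3) n * qpoch (q ^ 2) (q ^ 3) n) +
        qpoch (q ^ 2 * x) (q ^ 3) n * qpoch (q / x) (q ^ 3) n /
          (qpoch q (q ^ 3) n * qpoch (q ^ 2) (q ^ 3) n)) / 2 := by
  have h1 := cubicTerm_sum hq hg (mul_div_cancel₀ q hx) n
  have h2 := cubicTerm_sum hq hg (show 1 / x * (q * x) = q by field_simp) n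
  rw [show q * (q / x) = q ^ 2 / x by ring] at h1
  rw [show q * (q * x) = q ^ 2 * x by ring, show q * (1 / x) = q / x by ring,
    mul_comm (qpoch (q / x) _ n)] at h2
  rw [← h1, ← h2, ← sum_add_distrib, sum_div]
  refine sum_congr rfl fun k _ => ?_
  have hQ : 1 + q ^ k ≠ 0 := by
    intro h
    rcases Nat.eq_zero_or_pos k with rfl | hk
    · norm_num at h
    · exact hg (k * 2) (by omega) (by rw [pow_mul]; linear_combination (q ^ k - 1) * h)
  have hW := qpoch_two_mul q s hs k
  have hW' : (qpoch q q k * qpoch (-1) q k * qpoch s q k * qpoch (-s) q k)⁻¹ =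
      (1 + q ^ k) / 2 * (qpoch q q (2 * k))⁻¹ := by
    rw [← eq_div_iff hQ] at hW
    rw [hW, inv_div, div_eq_mul_inv, mul_inv]
    ring
  rw [div_eq_mul_inv _ (qpoch q q k * _ * _ * _), hW']
  have h3 := qpoch_mul_qpoch_symm (q := q) hx hx1 k
  simp only [cubicTerm]
  simp only [div_eq_mul_inv _ (qpoch _ _ _)]
  linear_combination (-(qpoch (q ^ (3 * n))⁻¹ (q ^ 3) k * (qpoch (q ^ (3 * n))⁻¹ q k)⁻¹ *
    (qpoch q q (2 * k))⁻¹ * q ^ k / 2)) * h3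

/-- Prefactor of the expansion of `basisQuot`. -/
noncomputable def connPrefactor (q s x : ℂ) (ℓ : ℕ) : ℂ :=
  qpoch (q * x) q ℓ * qpoch (s * x) q ℓ / (qpoch (q * x ^ 2) q ℓ * qpoch s q ℓ)

/-- Coefficients, up to `connPrefactor`, of the expansion of `basisQuot`. -/
noncomputable def connTerm (q s x : ℂ) (ℓ i : ℕ) : ℂ :=
  q ^ (ℓ * i) * s ^ i * ((1 + x * q ^ i) / (1 + x)) *
    (qpoch (q ^ ℓ)⁻¹ q i * qpoch (x ^ 2) q i) / (qpoch q q i * qpoch (x ^ 2 * q ^ (ℓ + 1)) q i)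

/-- The quotient `(x; q)_k (q ^ (-ℓ) / x; q)_k / (s q ^ (-ℓ); q)_k`. -/
noncomputable def basisQuot (q s x : ℂ) (ℓ k : ℕ) : ℂ :=
  qpoch x q k * qpoch ((q ^ ℓ)⁻¹ / x) q k / qpoch (s * (q ^ ℓ)⁻¹) q k

theorem connPrefactor_succ (q s x : ℂ) (ℓ : ℕ) :
    connPrefactor q s x (ℓ + 1) = connPrefactor q s x ℓ *
      ((1 - q ^ ℓ * q * x) * (1 - s * x * q ^ ℓ) /
        ((1 - q ^ ℓ * q * x ^ 2) * (1 - s * q ^ ℓ))) := by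
  simp only [connPrefactor, qpoch_succ, div_eq_mul_inv, mul_inv]
  ring

theorem connPrefactor_mul {q s x : ℂ} {ℓ : ℕ} (h1 : 1 - q * x ≠ 0) (h2 : 1 - s * x ≠ 0)
    (h3 : 1 - q * x ^ 2 ≠ 0) (h4 : 1 - q ^ 2 * x ^ 2 ≠ 0)
    (h5 : qpoch (q * x ^ 2) q (ℓ + 2) ≠ 0) :
    connPrefactor q s (q * x) ℓ = connPrefactor q s x ℓ *
      ((1 - q ^ ℓ * q * x) * (1 - s * x * q ^ ℓ) * ((1 - q * x ^ 2) * (1 - q ^ 2 * x ^ 2)) /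
        ((1 - q * x) * (1 - s * x) *
          ((1 - q ^ ℓ * q * x ^ 2) * (1 - q ^ ℓ * q ^ 2 * x ^ 2)))) := by
  have e1 := one_sub_mul_qpoch (q * x) q ℓ
  have e2 := one_sub_mul_qpoch (s * x) q ℓ
  have e3 : (1 - q * x ^ 2) * ((1 - q ^ 2 * x ^ 2) * qpoch (q * (q * x) ^ 2) q ℓ) =
      qpoch (q * x ^ 2) q ℓ * ((1 - q ^ ℓ * q * x ^ 2) * (1 - q ^ ℓ * q ^ 2 * x ^ 2)) := by
    have := (qpoch_succ' (q * x ^ 2) q (ℓ + 1)).symm.trans (qpoch_succ (q * x ^ 2) q (ℓ + 1))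
    rw [qpoch_succ' (q * x ^ 2 * q), qpoch_succ (q * x ^ 2)] at this
    rw [show q * (q * x) ^ 2 = q * x ^ 2 * q * q by ring,
      show 1 - q ^ 2 * x ^ 2 = 1 - q * x ^ 2 * q by ring, this]
    ring
  rw [qpoch_succ, qpoch_succ] at h5
  have h6 := left_ne_zero_of_mul (left_ne_zero_of_mul h5)
  have h7 : (1 - q ^ ℓ * q * x ^ 2) ≠ 0 := by
    convert right_ne_zero_of_mul (left_ne_zero_of_mul h5) using 1; ring
  have h8 : (1 - q ^ ℓ * q ^ 2 * x ^ 2) ≠ 0 := by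
    convert right_ne_zero_of_mul h5 using 1; ring
  rw [show q * x * q = q * (q * x) by ring, mul_comm, ← eq_div_iff h1] at e1
  rw [show s * x * q = s * (q * x) by ring, mul_comm, ← eq_div_iff h2] at e2
  rw [← mul_assoc, mul_comm, ← eq_div_iff (mul_ne_zero h3 h4)] at e3
  simp only [connPrefactor]
  rw [e1, e2, e3]
  simp only [div_eq_mul_inv, mul_inv, inv_inv]
  ring

theorem connTerm_succ {q s x : ℂ} {ℓ i : ℕ} (h : 1 + x * q ^ i ≠ 0) :
    connTerm q s x ℓ (i + 1) = connTerm q s x ℓ i *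
      (q ^ ℓ * s * (1 + x * q * q ^ i) / (1 + x * q ^ i) * (1 - (q ^ ℓ)⁻¹ * q ^ i) *
        (1 - x ^ 2 * q ^ i) / ((1 - q * q ^ i) * (1 - x ^ 2 * q ^ ℓ * q * q ^ i))) := by
  have h0 := mul_inv_cancel₀ h
  simp only [connTerm, qpoch_succ, div_eq_mul_inv, mul_inv]
  rw [show x ^ 2 * q ^ (ℓ + 1) * q ^ i = x ^ 2 * q ^ ℓ * q * q ^ i by ring,
    show x * q ^ (i + 1) = x * q * q ^ i by ring, show q ^ (ℓ * (i + 1)) = q ^ (ℓ * i) * q ^ ℓ by ring]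
  generalize (1 + x * q ^ i) = w at *
  generalize 1 + x * q * q ^ i = w' at *
  generalize (1 + x)⁻¹ = w'' at *
  generalize (1 - (q ^ ℓ)⁻¹ * q ^ i) = d at *
  generalize (1 - x ^ 2 * q ^ ℓ * q * q ^ i)⁻¹ = d1 at *
  generalize (1 - q * q ^ i)⁻¹ = d2 at *
  generalize (1 - x ^ 2 * q ^ i) = d3 at *
  linear_combination (-(q ^ (ℓ * i) * s ^ i * w'' * (qpoch (q ^ ℓ)⁻¹ q i * qpoch (x ^ 2) q i) *
    ((qpoch q q i)⁻¹ * (qpoch (x ^ 2 * q ^ (ℓ + 1)) q i)⁻¹) *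
    (q ^ ℓ * s * w' * d * d3 * (d2 * d1)))) * h0

theorem connTerm_succ_succ {q s x : ℂ} {ℓ i : ℕ} (hq : q ≠ 0) (h : 1 + x * q ^ i ≠ 0)
    (h1 : qpoch (x ^ 2 * q ^ (ℓ + 1)) q (i + 2) ≠ 0) :
    connTerm q s x (ℓ + 1) (i + 1) = connTerm q s x ℓ i *
      (q ^ ℓ * q ^ i * q * s * (1 + x * q * q ^ i) / (1 + x * q ^ i) *
        (1 - (q ^ ℓ * q)⁻¹) * (1 - x ^ 2 * q ^ i) * (1 - x ^ 2 * q ^ ℓ * q) /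
        ((1 - q * q ^ i) * ((1 - x ^ 2 * q ^ ℓ * q * q ^ i) *
          (1 - x ^ 2 * q ^ ℓ * q ^ 2 * q ^ i)))) := by
  have e : (1 - x ^ 2 * q ^ ℓ * q) * qpoch (x ^ 2 * q ^ (ℓ + 1 + 1)) q (i + 1) =
      qpoch (x ^ 2 * q ^ (ℓ + 1)) q i *
        ((1 - x ^ 2 * q ^ ℓ * q * q ^ i) * (1 - x ^ 2 * q ^ ℓ * q ^ 2 * q ^ i)) := by
    have := (qpoch_succ' (x ^ 2 * q ^ (ℓ + 1)) q (i + 1)).symm.trans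
      (qpoch_succ (x ^ 2 * q ^ (ℓ + 1)) q (i + 1))
    rw [qpoch_succ (x ^ 2 * q ^ (ℓ + 1)) q i] at this
    rw [show x ^ 2 * q ^ (ℓ + 1 + 1) = x ^ 2 * q ^ (ℓ + 1) * q by ring,
      show x ^ 2 * q ^ ℓ * q = x ^ 2 * q ^ (ℓ + 1) by ring, this]
    ring
  have hd : 1 - x ^ 2 * q ^ ℓ * q ≠ 0 := by
    rw [qpoch_succ'] at h1
    convert left_ne_zero_of_mul h1 using 1; ring
  rw [mul_comm, ← eq_div_iff hd] at e
  have e2 : qpoch (q ^ (ℓ + 1))⁻¹ q (i + 1) = (1 - (q ^ ℓ * q)⁻¹) * qpoch (q ^ ℓ)⁻¹ q i := by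
    rw [qpoch_succ', pow_succ, mul_inv, mul_assoc _ q⁻¹, inv_mul_cancel₀ hq, mul_one]
  have h0 := mul_inv_cancel₀ h
  simp only [connTerm, e, e2]
  generalize 1 - (q ^ ℓ * q)⁻¹ = d at *
  simp only [qpoch_succ, div_eq_mul_inv, mul_inv, inv_inv]
  rw [show x * q ^ (i + 1) = x * q * q ^ i by ring,
    show q ^ ((ℓ + 1) * (i + 1)) = q ^ (ℓ * i) * (q ^ ℓ * q ^ i * q) by ring]
  generalize 1 + x * q ^ i = w at *
  generalize 1 + x * q * q ^ i = w' at *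
  generalize (1 + x)⁻¹ = w'' at *
  generalize (1 - x ^ 2 * q ^ ℓ * q * q ^ i)⁻¹ = d0 at *
  generalize (1 - x ^ 2 * q ^ ℓ * q ^ 2 * q ^ i)⁻¹ = d1 at *
  generalize (1 - q * q ^ i)⁻¹ = d2 at *
  generalize 1 - x ^ 2 * q ^ i = d3 at *
  linear_combination (-(q ^ (ℓ * i) * s ^ i * w'' * (qpoch (q ^ ℓ)⁻¹ q i * qpoch (x ^ 2) q i) *
    ((qpoch q q i)⁻¹ * (qpoch (x ^ 2 * q ^ (ℓ + 1)) q i)⁻¹) *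
    (q ^ ℓ * q ^ i * q * s * w' * d * d3 * (d2 * (d0 * d1)) * (1 - x ^ 2 * q ^ ℓ * q)))) * h0

theorem connTerm_mul {q s x : ℂ} {ℓ i : ℕ} (h : 1 + x * q ^ i ≠ 0) (hx : 1 + x ≠ 0)
    (h1 : qpoch (x ^ 2 * q ^ (ℓ + 1)) q (i + 2) ≠ 0) (h2 : qpoch (x ^ 2) q 2 ≠ 0) :
    connTerm q s (q * x) ℓ i = connTerm q s x ℓ i *
      ((1 + x * q * q ^ i) * (1 + x) / ((1 + q * x) * (1 + x * q ^ i)) *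
        ((1 - x ^ 2 * q ^ i) * (1 - x ^ 2 * q * q ^ i)) *
        ((1 - x ^ 2 * q ^ ℓ * q) * (1 - x ^ 2 * q ^ ℓ * q ^ 2)) /
        ((1 - x ^ 2) * (1 - x ^ 2 * q) * ((1 - x ^ 2 * q ^ ℓ * q * q ^ i) *
          (1 - x ^ 2 * q ^ ℓ * q ^ 2 * q ^ i)))) := by
  have e : (1 - x ^ 2 * q ^ ℓ * q) * ((1 - x ^ 2 * q ^ ℓ * q ^ 2) *
      qpoch ((q * x) ^ 2 * q ^ (ℓ + 1)) q i) = qpoch (x ^ 2 * q ^ (ℓ + 1)) q i *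
        ((1 - x ^ 2 * q ^ ℓ * q * q ^ i) * (1 - x ^ 2 * q ^ ℓ * q ^ 2 * q ^ i)) := by
    have := (qpoch_succ' (x ^ 2 * q ^ (ℓ + 1)) q (i + 1)).symm.trans
      (qpoch_succ (x ^ 2 * q ^ (ℓ + 1)) q (i + 1))
    rw [qpoch_succ (x ^ 2 * q ^ (ℓ + 1)) q i, qpoch_succ'] at this
    rw [show (q * x) ^ 2 * q ^ (ℓ + 1) = x ^ 2 * q ^ (ℓ + 1) * q * q by ring,
      show 1 - x ^ 2 * q ^ ℓ * q = 1 - x ^ 2 * q ^ (ℓ + 1) by ring,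
      show 1 - x ^ 2 * q ^ ℓ * q ^ 2 = 1 - x ^ 2 * q ^ (ℓ + 1) * q by ring, this]
    ring
  have e' : (1 - x ^ 2) * ((1 - x ^ 2 * q) * qpoch ((q * x) ^ 2) q i) = qpoch (x ^ 2) q i *
      ((1 - x ^ 2 * q ^ i) * (1 - x ^ 2 * q * q ^ i)) := by
    have := (qpoch_succ' (x ^ 2) q (i + 1)).symm.trans (qpoch_succ (x ^ 2) q (i + 1))
    rw [qpoch_succ (x ^ 2) q i, qpoch_succ'] at this
    rw [show (q * x) ^ 2 = x ^ 2 * q * q by ring, this]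
    ring
  rw [qpoch_succ', qpoch_succ'] at h1 h2
  have hd1 : 1 - x ^ 2 * q ^ ℓ * q ≠ 0 := by
    convert left_ne_zero_of_mul h1 using 1; ring
  have hd2 : 1 - x ^ 2 * q ^ ℓ * q ^ 2 ≠ 0 := by
    convert left_ne_zero_of_mul (right_ne_zero_of_mul h1) using 1; ring
  have hd3 := left_ne_zero_of_mul h2
  have hd4 := left_ne_zero_of_mul (right_ne_zero_of_mul h2)
  rw [← mul_assoc, mul_comm, ← eq_div_iff (mul_ne_zero hd1 hd2)] at e
  rw [← mul_assoc, mul_comm, ← eq_div_iff (mul_ne_zero hd3 hd4)] at e'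
  have h0 := mul_inv_cancel₀ h
  have h0' := mul_inv_cancel₀ hx
  simp only [connTerm, e, e']
  simp only [div_eq_mul_inv, mul_inv, inv_inv]
  rw [show q * x * q ^ i = x * q * q ^ i by ring]
  generalize 1 + x * q ^ i = w at *
  generalize 1 + x * q * q ^ i = w' at *
  generalize 1 + x = w'' at *
  generalize (1 - x ^ 2 * q ^ ℓ * q * q ^ i)⁻¹ = d0 at *
  generalize (1 - x ^ 2 * q ^ ℓ * q ^ 2 * q ^ i)⁻¹ = d1 at *
  generalize 1 - x ^ 2 * q ^ ℓ * q = d2 at *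
  generalize 1 - x ^ 2 * q ^ ℓ * q ^ 2 = d3 at *
  generalize 1 - x ^ 2 * q ^ i = d4 at *
  generalize 1 - x ^ 2 * q * q ^ i = d5 at *
  generalize (1 - x ^ 2)⁻¹ = d6 at *
  generalize (1 - x ^ 2 * q)⁻¹ = d7 at *
  generalize (1 + q * x)⁻¹ = d8 at *
  have h00 : w * w⁻¹ * (w'' * w''⁻¹) = 1 := by rw [h0, h0', one_mul]
  linear_combination (-(q ^ (ℓ * i) * s ^ i * (qpoch (q ^ ℓ)⁻¹ q i * qpoch (x ^ 2) q i) *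
    ((qpoch q q i)⁻¹ * (qpoch (x ^ 2 * q ^ (ℓ + 1)) q i)⁻¹) *
    (w' * d0 * d1 * d2 * d3 * d4 * d5 * d6 * d7 * d8))) * h00

/-- First coefficient of the contiguous relation for `basisQuot`. -/
noncomputable def contigA (q s x : ℂ) (ℓ : ℕ) : ℂ :=
  (1 - q ^ ℓ * q * x) * (1 - s * x * q ^ ℓ) / ((1 - q ^ ℓ * q * x ^ 2) * (1 - s * q ^ ℓ))

/-- Second coefficient of the contiguous relation for `basisQuot`. -/
noncomputable def contigB (q s x : ℂ) (ℓ : ℕ) : ℂ :=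
  -((1 - s * x) * (1 - x) * (q ^ ℓ * s)) / ((1 - q ^ ℓ * q * x ^ 2) * (1 - s * q ^ ℓ))

theorem basisQuot_contig {q s x : ℂ} {ℓ k : ℕ} (hs : s ^ 2 = q) (hs0 : s ≠ 0) (hx0 : x ≠ 0)
    (hx : 1 - x ≠ 0) (h1 : 1 - q ^ ℓ * q * x ≠ 0) (h2 : 1 - q ^ ℓ * q * x ^ 2 ≠ 0)
    (h3 : 1 - s * q ^ ℓ ≠ 0)
    (h4 : qpoch (s * (q ^ (ℓ + 1))⁻¹) q (k + 1) ≠ 0) :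
    basisQuot q s x (ℓ + 1) k =
      contigA q s x ℓ * basisQuot q s x ℓ k + contigB q s x ℓ * basisQuot q s (q * x) ℓ k := by
  have hq : q ≠ 0 := by rw [← hs]; exact pow_ne_zero 2 hs0
  have hp : q ^ ℓ ≠ 0 := pow_ne_zero ℓ hq
  have e1 := one_sub_mul_qpoch x q k
  have e2 := one_sub_mul_qpoch ((q ^ (ℓ + 1))⁻¹ / x) q k
  have e3 := one_sub_mul_qpoch (s * (q ^ (ℓ + 1))⁻¹) q k
  have hd1 : 1 - (q ^ (ℓ + 1))⁻¹ / x ≠ 0 := by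
    intro h
    apply h1
    field_simp at h
    linear_combination -h
  have hd2 : 1 - s * (q ^ (ℓ + 1))⁻¹ ≠ 0 := by
    rw [qpoch_succ'] at h4
    exact left_ne_zero_of_mul h4
  rw [qpoch_succ] at h4
  have hd3 := left_ne_zero_of_mul h4
  have hd4 := right_ne_zero_of_mul h4
  rw [mul_comm, ← eq_div_iff hx, mul_comm x q] at e1
  rw [mul_comm, ← eq_div_iff hd1,
    show (q ^ (ℓ + 1))⁻¹ / x * q = (q ^ ℓ)⁻¹ / x by rw [pow_succ]; field_simp] at e2
  rw [mul_comm, ← eq_div_iff hd2,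
    show s * (q ^ (ℓ + 1))⁻¹ * q = s * (q ^ ℓ)⁻¹ by rw [pow_succ]; field_simp] at e3
  have e4 : (q ^ ℓ)⁻¹ / (q * x) = (q ^ (ℓ + 1))⁻¹ / x := by rw [pow_succ]; field_simp
  simp only [basisQuot, contigA, contigB, e1, e2, e3, e4]
  have key : (1 : ℂ) =
      (1 - q ^ ℓ * q * x) * (1 - s * x * q ^ ℓ) / ((1 - q ^ ℓ * q * x ^ 2) * (1 - s * q ^ ℓ)) *
        ((1 - (q ^ (ℓ + 1))⁻¹ / x * q ^ k) / (1 - (q ^ (ℓ + 1))⁻¹ / x) *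
          ((1 - s * (q ^ (ℓ + 1))⁻¹) / (1 - s * (q ^ (ℓ + 1))⁻¹ * q ^ k))) +
      -((1 - s * x) * (1 - x) * (q ^ ℓ * s)) / ((1 - q ^ ℓ * q * x ^ 2) * (1 - s * q ^ ℓ)) *
        ((1 - x * q ^ k) / (1 - x) *
          ((1 - s * (q ^ (ℓ + 1))⁻¹) / (1 - s * (q ^ (ℓ + 1))⁻¹ * q ^ k))) := by
    have a1 : 1 - (q ^ (ℓ + 1))⁻¹ / x = (q ^ ℓ * q * x - 1) / (q ^ ℓ * q * x) := by
      rw [pow_succ]; field_simp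
    have a2 : 1 - (q ^ (ℓ + 1))⁻¹ / x * q ^ k = (q ^ ℓ * q * x - q ^ k) / (q ^ ℓ * q * x) := by
      rw [pow_succ]; field_simp
    have a3 : 1 - s * (q ^ (ℓ + 1))⁻¹ = -(1 - s * q ^ ℓ) / (q ^ ℓ * s) := by
      rw [pow_succ, ← hs]; rw [← hs] at hp; field_simp; ring
    have a4 : 1 - s * (q ^ (ℓ + 1))⁻¹ * q ^ k = (q ^ ℓ * s - q ^ k) / (q ^ ℓ * s) := by
      rw [pow_succ, ← hs]; rw [← hs] at hp; field_simp
    rw [a4] at hd4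
    have hd5 : q ^ ℓ * s - q ^ k ≠ 0 := fun h => hd4 (by rw [h, zero_div])
    have hd6 : q ^ ℓ * q * x - 1 ≠ 0 := fun h => h1 (by linear_combination -h)
    rw [a1, a2, a3, a4]
    generalize q ^ ℓ = a at *
    generalize q ^ k = Q at *
    subst hs
    have h3' : 1 - a * s ≠ 0 := by rwa [mul_comm a s]
    field_simp
    ring
  simp only [div_eq_mul_inv, mul_inv, inv_inv] at key ⊢
  linear_combination (qpoch x q k * qpoch ((q ^ (ℓ + 1))⁻¹ * x⁻¹) q k *
    (qpoch (s * (q ^ (ℓ + 1))⁻¹) q k)⁻¹) * key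

theorem mul_pow_ne_of_generic {s x : ℂ} (hx : ∀ j : ℕ, x ^ 2 * (s ^ 2) ^ j ≠ 1) (j : ℕ) :
    1 - x * s ^ j ≠ 0 ∧ 1 + x * s ^ j ≠ 0 := by
  constructor
  · intro h
    exact hx j (by linear_combination (-(1 + x * s ^ j)) * h)
  · intro h
    exact hx j (by linear_combination (-(1 - x * s ^ j)) * h)

theorem pow_two_pow_ne_one {s : ℂ} (hg : ∀ j : ℕ, j ≠ 0 → s ^ j ≠ 1) (j : ℕ) (hj : j ≠ 0) :
    (s ^ 2) ^ j ≠ 1 := by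
  rw [← pow_mul]
  exact hg _ (by omega)

theorem connTerm_contig {s x : ℂ} (hs0 : s ≠ 0) (hg : ∀ j : ℕ, j ≠ 0 → s ^ j ≠ 1)
    (hx : ∀ j : ℕ, x ^ 2 * (s ^ 2) ^ j ≠ 1) (ℓ i : ℕ) :
    connPrefactor (s ^ 2) s x (ℓ + 1) * connTerm (s ^ 2) s x (ℓ + 1) (i + 1) =
      contigA (s ^ 2) s x ℓ *
          (connPrefactor (s ^ 2) s x ℓ * connTerm (s ^ 2) s x ℓ (i + 1)) +
        contigB (s ^ 2) s x ℓ *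
          (connPrefactor (s ^ 2) s (s ^ 2 * x) ℓ * connTerm (s ^ 2) s (s ^ 2 * x) ℓ i) := by
  have hq : s ^ 2 ≠ 0 := pow_ne_zero 2 hs0
  have n1 : 1 + x * (s ^ 2) ^ i ≠ 0 := by
    rw [← pow_mul]; exact (mul_pow_ne_of_generic hx _).2
  have n2 : 1 + x ≠ 0 := by simpa using (mul_pow_ne_of_generic hx 0).2
  have n2' : 1 - x ≠ 0 := by simpa using (mul_pow_ne_of_generic hx 0).1
  have n3 : qpoch (x ^ 2 * (s ^ 2) ^ (ℓ + 1)) (s ^ 2) (i + 2) ≠ 0 :=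
    qpoch_ne_zero fun j _ => by rw [mul_assoc, ← pow_add]; exact hx _
  have n4 : qpoch (x ^ 2) (s ^ 2) 2 ≠ 0 := qpoch_ne_zero fun j _ => hx j
  have n5 : 1 - s ^ 2 * x ≠ 0 := by
    have := (mul_pow_ne_of_generic hx 2).1
    rwa [mul_comm x] at this
  have n5' : 1 + s ^ 2 * x ≠ 0 := by
    have := (mul_pow_ne_of_generic hx 2).2
    rwa [mul_comm x] at this
  have n6 : 1 - s * x ≠ 0 := by
    have := (mul_pow_ne_of_generic hx 1).1
    rwa [mul_comm x, pow_one] at this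
  have n7 : 1 - s ^ 2 * x ^ 2 ≠ 0 := fun h => hx 1 (by linear_combination -h)
  have n8 : 1 - (s ^ 2) ^ 2 * x ^ 2 ≠ 0 := fun h => hx 2 (by linear_combination -h)
  have n9 : qpoch (s ^ 2 * x ^ 2) (s ^ 2) (ℓ + 2) ≠ 0 := qpoch_ne_zero fun j _ h =>
    hx (j + 1) (by linear_combination h)
  have n10 : 1 - s * (s ^ 2) ^ ℓ ≠ 0 := by
    rw [← pow_mul, ← pow_succ']
    exact sub_ne_zero.2 (hg _ (by omega)).symm
  have n11 : 1 - (s ^ 2) ^ ℓ * s ^ 2 * x ^ 2 ≠ 0 := fun h =>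
    hx (ℓ + 1) (by linear_combination -h)
  have n12 : 1 - (s ^ 2) ^ ℓ * (s ^ 2) ^ 2 * x ^ 2 ≠ 0 := fun h =>
    hx (ℓ + 2) (by linear_combination -h)
  have n14 : 1 - s ^ 2 * (s ^ 2) ^ i ≠ 0 := by
    rw [← pow_succ']
    exact sub_ne_zero.2 (pow_two_pow_ne_one hg _ (by omega)).symm
  have n15 : 1 - x ^ 2 * (s ^ 2) ^ ℓ * s ^ 2 * (s ^ 2) ^ i ≠ 0 := fun h =>
    hx (ℓ + 1 + i) (by linear_combination -h)
  have n16 : 1 - x ^ 2 * (s ^ 2) ^ ℓ * (s ^ 2) ^ 2 * (s ^ 2) ^ i ≠ 0 := fun h =>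
    hx (ℓ + 2 + i) (by linear_combination -h)
  have n17 : (s ^ 2) ^ ℓ ≠ 0 := pow_ne_zero _ hq
  rw [connPrefactor_succ, connPrefactor_mul n5 n6 n7 n8 n9,
    connTerm_succ_succ hq n1 n3, connTerm_succ n1, connTerm_mul n1 n2 n3 n4]
  simp only [contigA, contigB]
  generalize connPrefactor (s ^ 2) s x ℓ = P
  generalize connTerm (s ^ 2) s x ℓ i = T
  clear n3 n4 n9 hx hg hq
  generalize (s ^ 2) ^ ℓ = a at *
  generalize (s ^ 2) ^ i = b at *
  have key : (a * b * s ^ 2 * s * (1 + x * s ^ 2 * b) / (1 + x * b) *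
        (1 - (a * s ^ 2)⁻¹) * (1 - x ^ 2 * b) * (1 - x ^ 2 * a * s ^ 2) /
        ((1 - s ^ 2 * b) * ((1 - x ^ 2 * a * s ^ 2 * b) *
          (1 - x ^ 2 * a * (s ^ 2) ^ 2 * b)))) =
      (a * s * (1 + x * s ^ 2 * b) / (1 + x * b) * (1 - a⁻¹ * b) *
        (1 - x ^ 2 * b) / ((1 - s ^ 2 * b) * (1 - x ^ 2 * a * s ^ 2 * b))) -
      a * s * ((1 + x * s ^ 2 * b) * (1 - x ^ 2 * b) * (1 - x ^ 2 * s ^ 2 * b) /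
        ((1 + x * b) * ((1 - x ^ 2 * a * s ^ 2 * b) *
          (1 - x ^ 2 * a * (s ^ 2) ^ 2 * b)))) := by
    have h1 : a * s ^ 2 * (1 - (a * s ^ 2)⁻¹) = a * s ^ 2 - 1 := by
      rw [mul_sub, mul_inv_cancel₀ (mul_ne_zero n17 (pow_ne_zero 2 hs0)), mul_one]
    have h2 : a * (1 - a⁻¹ * b) = a - b := by
      rw [mul_sub, mul_inv_cancel_left₀ n17, mul_one]
    have core : b * (a * s ^ 2 - 1) * (1 - x ^ 2 * a * s ^ 2) =
        (a - b) * (1 - x ^ 2 * a * (s ^ 2) ^ 2 * b) -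
          a * (1 - x ^ 2 * s ^ 2 * b) * (1 - s ^ 2 * b) := by ring
    have h3 := mul_inv_cancel₀ n16
    have h4 := mul_inv_cancel₀ n14
    generalize 1 - (a * s ^ 2)⁻¹ = g at *
    generalize 1 - a⁻¹ * b = g' at *
    generalize 1 - x ^ 2 * b = z1 at *
    generalize 1 - x ^ 2 * a * s ^ 2 = y at *
    generalize 1 - x ^ 2 * s ^ 2 * b = z2 at *
    generalize 1 - s ^ 2 * b = d at *
    generalize 1 - x ^ 2 * a * s ^ 2 * b = e1 at *
    generalize 1 - x ^ 2 * a * (s ^ 2) ^ 2 * b = e2 at *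
    generalize 1 + x * s ^ 2 * b = w' at *
    generalize 1 + x * b = w at *
    simp only [div_eq_mul_inv, mul_inv]
    linear_combination (s * w' * w⁻¹ * z1 * y * d⁻¹ * e1⁻¹ * e2⁻¹ * b) * h1 +
      (s * w' * w⁻¹ * z1 * d⁻¹ * e1⁻¹ * e2⁻¹) * core +
      (s * w' * w⁻¹ * z1 * d⁻¹ * e1⁻¹ * (a - b)) * h3 -
      (a * z2 * s * w' * w⁻¹ * z1 * e1⁻¹ * e2⁻¹) * h4 - (s * w' * w⁻¹ * z1 * d⁻¹ * e1⁻¹) * h2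
  have key2 : -((1 - s * x) * (1 - x) * (a * s)) / ((1 - a * s ^ 2 * x ^ 2) * (1 - s * a)) *
      ((1 - a * s ^ 2 * x) * (1 - s * x * a) * ((1 - s ^ 2 * x ^ 2) * (1 - (s ^ 2) ^ 2 * x ^ 2)) /
        ((1 - s ^ 2 * x) * (1 - s * x) *
          ((1 - a * s ^ 2 * x ^ 2) * (1 - a * (s ^ 2) ^ 2 * x ^ 2)))) *
      ((1 + x * s ^ 2 * b) * (1 + x) / ((1 + s ^ 2 * x) * (1 + x * b)) *
        ((1 - x ^ 2 * b) * (1 - x ^ 2 * s ^ 2 * b)) *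
        ((1 - x ^ 2 * a * s ^ 2) * (1 - x ^ 2 * a * (s ^ 2) ^ 2)) /
        ((1 - x ^ 2) * (1 - x ^ 2 * s ^ 2) * ((1 - x ^ 2 * a * s ^ 2 * b) *
          (1 - x ^ 2 * a * (s ^ 2) ^ 2 * b)))) =
      -((1 - a * s ^ 2 * x) * (1 - s * x * a) / ((1 - a * s ^ 2 * x ^ 2) * (1 - s * a))) *
      (a * s * ((1 + x * s ^ 2 * b) * (1 - x ^ 2 * b) * (1 - x ^ 2 * s ^ 2 * b) /
        ((1 + x * b) * ((1 - x ^ 2 * a * s ^ 2 * b) *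
          (1 - x ^ 2 * a * (s ^ 2) ^ 2 * b))))) := by
    rw [show (1 - (s ^ 2) ^ 2 * x ^ 2) = (1 - s ^ 2 * x) * (1 + s ^ 2 * x) by ring,
      show 1 - x ^ 2 * s ^ 2 = 1 - s ^ 2 * x ^ 2 by ring,
      show 1 - x ^ 2 = (1 - x) * (1 + x) by ring,
      show 1 - x ^ 2 * a * s ^ 2 = 1 - a * s ^ 2 * x ^ 2 by ring,
      show 1 - x ^ 2 * a * (s ^ 2) ^ 2 = 1 - a * (s ^ 2) ^ 2 * x ^ 2 by ring]
    generalize 1 - x ^ 2 * b = z1 at *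
    generalize 1 - x ^ 2 * s ^ 2 * b = z2 at *
    generalize 1 - x ^ 2 * a * s ^ 2 * b = z3 at *
    generalize 1 - x ^ 2 * a * (s ^ 2) ^ 2 * b = z4 at *
    generalize 1 - a * s ^ 2 * x ^ 2 = z5 at *
    generalize 1 - a * (s ^ 2) ^ 2 * x ^ 2 = z6 at *
    generalize 1 - s ^ 2 * x ^ 2 = z7 at *
    generalize 1 - s ^ 2 * x = z8 at *
    generalize 1 + s ^ 2 * x = z9 at *
    generalize 1 - s * x = z10 at *
    generalize 1 - s * x * a = z11 at *
    generalize 1 - s * a = z12 at *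
    generalize 1 + x * b = z13 at *
    generalize 1 + x * s ^ 2 * b = z14 at *
    generalize 1 - a * s ^ 2 * x = z15 at *
    generalize 1 - x = z16 at *
    generalize 1 + x = z17 at *
    field_simp
  linear_combination (P * T * ((1 - a * s ^ 2 * x) * (1 - s * x * a) /
    ((1 - a * s ^ 2 * x ^ 2) * (1 - s * a)))) * key - P * T * key2

theorem connTerm_zero {q s x : ℂ} (hx : 1 + x ≠ 0) (ℓ : ℕ) : connTerm q s x ℓ 0 = 1 := by
  simp [connTerm, qpoch_zero, hx]

theorem connTerm_succ_self {q s x : ℂ} (hq : q ≠ 0) (ℓ : ℕ) : connTerm q s x ℓ (ℓ + 1) = 0 := by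
  have : qpoch (q ^ ℓ)⁻¹ q (ℓ + 1) = 0 := by
    rw [qpoch_succ, inv_mul_cancel₀ (pow_ne_zero ℓ hq), sub_self, mul_zero]
  simp [connTerm, this]

theorem basisQuot_expansion {s : ℂ} (hs0 : s ≠ 0) (hg : ∀ j : ℕ, j ≠ 0 → s ^ j ≠ 1) (ℓ k : ℕ)
    {x : ℂ} (hx0 : x ≠ 0) (hx : ∀ j : ℕ, x ^ 2 * (s ^ 2) ^ j ≠ 1) :
    basisQuot (s ^ 2) s x ℓ k = ∑ i ∈ range (ℓ + 1),
      connPrefactor (s ^ 2) s x ℓ * connTerm (s ^ 2) s x ℓ i *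
        basisQuot (s ^ 2) s (x * (s ^ 2) ^ i) 0 k := by
  have hq : s ^ 2 ≠ 0 := pow_ne_zero 2 hs0
  induction ℓ generalizing x with
  | zero =>
    have n2 : 1 + x ≠ 0 := by simpa using (mul_pow_ne_of_generic hx 0).2
    simp [connTerm_zero n2, connPrefactor, qpoch_zero]
  | succ ℓ ih =>
    have n2 : 1 + x ≠ 0 := by simpa using (mul_pow_ne_of_generic hx 0).2
    have n2' : 1 - x ≠ 0 := by simpa using (mul_pow_ne_of_generic hx 0).1
    have n3 : 1 - (s ^ 2) ^ ℓ * s ^ 2 * x ≠ 0 := by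
      have := (mul_pow_ne_of_generic hx (2 * ℓ + 2)).1
      convert this using 1; ring
    have n4 : 1 - (s ^ 2) ^ ℓ * s ^ 2 * x ^ 2 ≠ 0 := fun h =>
      hx (ℓ + 1) (by linear_combination -h)
    have n5 : 1 - s * (s ^ 2) ^ ℓ ≠ 0 := by
      rw [← pow_mul, ← pow_succ']
      exact sub_ne_zero.2 (hg _ (by omega)).symm
    have n6 : qpoch (s * ((s ^ 2) ^ (ℓ + 1))⁻¹) (s ^ 2) (k + 1) ≠ 0 := by
      refine qpoch_ne_zero fun j _ h => ?_
      have h1 : s ^ (2 * j + 1) = s ^ (2 * (ℓ + 1)) := by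
        have hne : s ^ (2 * (ℓ + 1)) ≠ 0 := pow_ne_zero _ hs0
        rw [← pow_mul] at h
        field_simp at h
        rw [← h]; ring
      rcases lt_or_ge (2 * j + 1) (2 * (ℓ + 1)) with hlt | hge
      · refine hg (2 * (ℓ + 1) - (2 * j + 1)) (by omega) ?_
        refine mul_right_cancel₀ (pow_ne_zero (2 * j + 1) hs0) ?_
        rw [← pow_add, Nat.sub_add_cancel hlt.le, one_mul, h1]
      · refine hg (2 * j + 1 - 2 * (ℓ + 1)) (by omega) ?_
        refine mul_right_cancel₀ (pow_ne_zero (2 * (ℓ + 1)) hs0) ?_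
        rw [← pow_add, Nat.sub_add_cancel hge, one_mul, h1]
    have hx' : ∀ j : ℕ, (s ^ 2 * x) ^ 2 * (s ^ 2) ^ j ≠ 1 := fun j h =>
      hx (j + 2) (by rw [← h]; ring)
    rw [basisQuot_contig rfl hs0 hx0 n2' n3 n4 n5 n6, ih hx0 hx, ih (mul_ne_zero hq hx0) hx',
      sum_range_succ' _ (ℓ + 1)]
    simp only [connTerm_contig hs0 hg hx, add_mul, sum_add_distrib]
    have e1 : ∑ i ∈ range (ℓ + 1), connPrefactor (s ^ 2) s x ℓ * connTerm (s ^ 2) s x ℓ i *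
        basisQuot (s ^ 2) s (x * (s ^ 2) ^ i) 0 k =
        ∑ i ∈ range (ℓ + 1), connPrefactor (s ^ 2) s x ℓ * connTerm (s ^ 2) s x ℓ (i + 1) *
          basisQuot (s ^ 2) s (x * (s ^ 2) ^ (i + 1)) 0 k +
        connPrefactor (s ^ 2) s x ℓ * basisQuot (s ^ 2) s (x * (s ^ 2) ^ 0) 0 k := by
      have := sum_range_succ (fun i => connPrefactor (s ^ 2) s x ℓ * connTerm (s ^ 2) s x ℓ i *
        basisQuot (s ^ 2) s (x * (s ^ 2) ^ i) 0 k) (ℓ + 1)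
      rw [sum_range_succ'] at this
      simp only [connTerm_succ_self hq, connTerm_zero n2, mul_one, mul_zero, zero_mul,
        add_zero] at this
      exact this.symm
    have e2 : connPrefactor (s ^ 2) s x (ℓ + 1) = connPrefactor (s ^ 2) s x ℓ *
        contigA (s ^ 2) s x ℓ := connPrefactor_succ _ _ _ _
    have e3 : ∀ i, s ^ 2 * x * (s ^ 2) ^ i = x * (s ^ 2) ^ (i + 1) := fun i => by ring
    rw [e1, connTerm_zero n2, e2]
    simp only [e3, mul_add, mul_sum]
    simp only [mul_assoc, mul_comm, mul_left_comm]
    ring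

/-- Left-hand side of `q_gosper_related_extension`. -/
noncomputable def gosperLhs (ℓ n : ℕ) (q x s : ℂ) : ℂ :=
  ∑ k ∈ Finset.range (n+1),
      qpoch (q ^ (-(3*n : ℤ))) (q^3) k *
        (qpoch x q k * qpoch (q ^ (-(ℓ : ℤ)) / x) q k) /
        (qpoch q q k * qpoch (-1) q k * qpoch (s * q ^ (-(ℓ : ℤ))) q k * qpoch (-s) q k *
          qpoch (q ^ (-(3*n : ℤ))) q k) * q^k

/-- Right-hand side of `q_gosper_related_extension`. -/
noncomputable def gosperRhs (ℓ n : ℕ) (q x s : ℂ) : ℂ :=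
  (qpoch (q*x) q ℓ * qpoch (s*x) q ℓ) / (qpoch (q * x^2) q ℓ * qpoch s q ℓ) *
        ∑ i ∈ Finset.range (ℓ+1),
          (q^(ℓ*i) * s^i) * ((1 + x * q^i) / (2 * (1 + x))) *
            (qpoch (q ^ (-(ℓ : ℤ))) q i * qpoch (x^2) q i) /
            (qpoch q q i * qpoch (x^2 * q^(ℓ+1)) q i) *
            ((qpoch (q^(1+i)*x) (q^3) n * qpoch (q ^ (2 - i : ℤ) / x) (q^3) n) /
                (qpoch q (q^3) n * qpoch (q^2) (q^3) n)
              + (qpoch (q^(2+i)*x) (q^3) n * qpoch (q ^ (1 - i : ℤ) / x) (q^3) n) /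
                (qpoch q (q^3) n * qpoch (q^2) (q^3) n))

theorem gosperLhs_eq_gosperRhs_of_generic (ℓ n : ℕ) {s x : ℂ} (hs0 : s ≠ 0)
    (hg : ∀ j : ℕ, j ≠ 0 → s ^ j ≠ 1) (hx0 : x ≠ 0)
    (hx : ∀ j : ℕ, x ^ 2 * (s ^ 2) ^ j ≠ 1) :
    gosperLhs ℓ n (s ^ 2) x s = gosperRhs ℓ n (s ^ 2) x s := by
  have hq : s ^ 2 ≠ 0 := pow_ne_zero 2 hs0
  have hgq := pow_two_pow_ne_one hg
  have hexp := fun k => basisQuot_expansion hs0 hg ℓ k hx0 hx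
  have hx1 : ∀ i : ℕ, x * (s ^ 2) ^ i ≠ 1 := fun i h =>
    (mul_pow_ne_of_generic hx (2 * i)).1 (by rw [pow_mul, h, sub_self])
  have hgos := fun i => gosper_sum hq rfl hgq
    (mul_ne_zero hx0 (pow_ne_zero i hq)) (hx1 i) n
  have z1 : (s ^ 2) ^ (-(3 * n : ℤ)) = ((s ^ 2) ^ (3 * n))⁻¹ := by
    rw [zpow_neg]; exact_mod_cast rfl
  have z2 : (s ^ 2) ^ (-(ℓ : ℤ)) = ((s ^ 2) ^ ℓ)⁻¹ := by rw [zpow_neg, zpow_natCast]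
  have z3 : ∀ i : ℕ, (s ^ 2) ^ (2 - i : ℤ) / x = (s ^ 2) ^ 2 / (x * (s ^ 2) ^ i) := fun i => by
    rw [zpow_sub₀ hq, zpow_natCast, div_div, mul_comm x]; norm_cast
  have z4 : ∀ i : ℕ, (s ^ 2) ^ (1 - i : ℤ) / x = s ^ 2 / (x * (s ^ 2) ^ i) := fun i => by
    rw [zpow_sub₀ hq, zpow_natCast, div_div, mul_comm x, zpow_one]
  have z5 : ∀ i : ℕ, (s ^ 2) ^ (1 + i) * x = s ^ 2 * (x * (s ^ 2) ^ i) := fun i => by ring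
  have z6 : ∀ i : ℕ, (s ^ 2) ^ (2 + i) * x = (s ^ 2) ^ 2 * (x * (s ^ 2) ^ i) := fun i => by ring
  simp only [gosperLhs, gosperRhs, z1, z2, z3, z4, z5, z6]
  generalize s ^ 2 = q at *
  have hL : ∀ k, qpoch (q ^ (3 * n))⁻¹ (q ^ 3) k * (qpoch x q k * qpoch ((q ^ ℓ)⁻¹ / x) q k) /
        (qpoch q q k * qpoch (-1) q k * qpoch (s * (q ^ ℓ)⁻¹) q k * qpoch (-s) q k *
          qpoch (q ^ (3 * n))⁻¹ q k) * q ^ k =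
      ∑ i ∈ range (ℓ + 1), connPrefactor q s x ℓ * connTerm q s x ℓ i *
        (qpoch (q ^ (3 * n))⁻¹ (q ^ 3) k / qpoch (q ^ (3 * n))⁻¹ q k *
        (qpoch (x * q ^ i) q k * qpoch (1 / (x * q ^ i)) q k) /
        (qpoch q q k * qpoch (-1) q k * qpoch s q k * qpoch (-s) q k) * q ^ k) := by
    intro k
    trans qpoch (q ^ (3 * n))⁻¹ (q ^ 3) k / qpoch (q ^ (3 * n))⁻¹ q k /
        (qpoch q q k * qpoch (-1) q k * qpoch (-s) q k) * q ^ k * basisQuot q s x ℓ k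
    · simp only [basisQuot, div_eq_mul_inv, mul_inv]
      ring
    · rw [hexp, mul_sum]
      refine sum_congr rfl fun i _ => ?_
      simp only [basisQuot, pow_zero, inv_one, mul_one, div_eq_mul_inv, mul_inv]
      ring
  simp only [hL]
  rw [sum_comm, mul_sum]
  refine sum_congr rfl fun i _ => ?_
  rw [← mul_sum, hgos]
  simp only [connPrefactor, connTerm, div_eq_mul_inv, mul_inv]
  ring

theorem ContinuousAt.qpoch {X : Type*} [TopologicalSpace X] {a q : X → ℂ} {t : X}
    (ha : ContinuousAt a t) (hq : ContinuousAt q t) (k : ℕ) :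
    ContinuousAt (fun y => qpoch (a y) (q y) k) t := by
  induction k with
  | zero => simpa only [qpoch_zero] using continuousAt_const
  | succ k ih =>
    simp only [qpoch_succ]
    exact ih.mul (continuousAt_const.sub (ha.mul (hq.pow k)))

theorem continuousAt_gosperLhs {X : Type*} [TopologicalSpace X] {q x s : X → ℂ} {t : X}
    (cq : ContinuousAt q t) (cx : ContinuousAt x t) (cs : ContinuousAt s t) (ℓ n : ℕ)
    (hq : q t ≠ 0) (hx : x t ≠ 0)
    (hden : ∀ k ≤ n,
      _root_.qpoch (q t) (q t) k * _root_.qpoch (-1) (q t) k *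
        _root_.qpoch (s t * q t ^ (-(ℓ : ℤ))) (q t) k *
        _root_.qpoch (-s t) (q t) k * _root_.qpoch (q t ^ (-(3*n : ℤ))) (q t) k ≠ 0) :
    ContinuousAt (fun y => gosperLhs ℓ n (q y) (x y) (s y)) t := by
  have cz : ∀ m : ℤ, ContinuousAt (fun y => q y ^ m) t := fun m => cq.zpow₀ m (Or.inl hq)
  refine tendsto_finsetSum _ fun k hk => ?_
  have hk' : k ≤ n := by have := mem_range.1 hk; omega
  refine ContinuousAt.mul (ContinuousAt.div ?_ ?_ (hden k hk')) (cq.pow k)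
  · exact ((cz _).qpoch (cq.pow 3) k).mul ((cx.qpoch cq k).mul (((cz _).div cx hx).qpoch cq k))
  · exact (((((cq.qpoch cq k).mul (continuousAt_const.qpoch cq k)).mul
      ((cs.mul (cz _)).qpoch cq k)).mul (cs.neg.qpoch cq k)).mul ((cz _).qpoch cq k))

theorem continuousAt_gosperRhs {X : Type*} [TopologicalSpace X] {q x s : X → ℂ} {t : X}
    (cq : ContinuousAt q t) (cx : ContinuousAt x t) (cs : ContinuousAt s t) (ℓ n : ℕ)
    (hq : q t ≠ 0) (hx : x t ≠ 0) (hx1 : 1 + x t ≠ 0)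
    (hdenℓ : qpoch (q t * x t ^ 2) (q t) ℓ * qpoch (s t) (q t) ℓ ≠ 0)
    (hdeni : ∀ i ≤ ℓ, qpoch (q t) (q t) i * qpoch (x t ^ 2 * q t ^ (ℓ + 1)) (q t) i ≠ 0)
    (hden2 : qpoch (q t) (q t ^ 3) n * qpoch (q t ^ 2) (q t ^ 3) n ≠ 0) :
    ContinuousAt (fun y => gosperRhs ℓ n (q y) (x y) (s y)) t := by
  have cz : ∀ m : ℤ, ContinuousAt (fun y => q y ^ m) t := fun m => cq.zpow₀ m (Or.inl hq)
  refine ContinuousAt.mul (ContinuousAt.div ?_ ?_ hdenℓ) (tendsto_finsetSum _ fun i hi => ?_)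
  · exact ((cq.mul cx).qpoch cq ℓ).mul ((cs.mul cx).qpoch cq ℓ)
  · exact ((cq.mul (cx.pow 2)).qpoch cq ℓ).mul (cs.qpoch cq ℓ)
  have hi' : i ≤ ℓ := by have := mem_range.1 hi; omega
  have cd := (cq.qpoch (cq.pow 3) n).mul ((cq.pow 2).qpoch (cq.pow 3) n)
  refine ContinuousAt.mul (ContinuousAt.div (ContinuousAt.mul (ContinuousAt.mul ?_ ?_) ?_) ?_
    (hdeni i hi')) (ContinuousAt.add (ContinuousAt.div ?_ cd hden2) (ContinuousAt.div ?_ cd hden2))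
  · exact (cq.pow _).mul (cs.pow _)
  · exact (continuousAt_const.add (cx.mul (cq.pow i))).div
      (continuousAt_const.mul (continuousAt_const.add cx)) (mul_ne_zero two_ne_zero hx1)
  · exact ((cz _).qpoch cq i).mul ((cx.pow 2).qpoch cq i)
  · exact (cq.qpoch cq i).mul (((cx.pow 2).mul (cq.pow _)).qpoch cq i)
  · exact (((cq.pow _).mul cx).qpoch (cq.pow 3) n).mul (((cz _).div cx hx).qpoch (cq.pow 3) n)
  · exact (((cq.pow _).mul cx).qpoch (cq.pow 3) n).mul (((cz _).div cx hx).qpoch (cq.pow 3) n)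

theorem countable_setOf_mul_pow_eq_one (c : ℂ) {m : ℕ} (hm : m ≠ 0) :
    {t : ℂ | c * t ^ m = 1}.Countable := by
  refine ((Polynomial.nthRootsFinset m c⁻¹).finite_toSet.subset fun t ht => ?_).countable
  rw [Finset.mem_coe, Polynomial.mem_nthRootsFinset (Nat.pos_of_ne_zero hm)]
  exact eq_inv_of_mul_eq_one_right ht

theorem frequently_generic (s x : ℂ) : ∃ᶠ t in nhds (1 : ℂ), t ≠ 0 ∧
    (∀ j : ℕ, j ≠ 0 → (s * t ^ 2) ^ j ≠ 1) ∧
    ∀ j : ℕ, (x * t) ^ 2 * ((s * t ^ 2) ^ 2) ^ j ≠ 1 := by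
  have hc : ({0} ∪ ((⋃ j : ℕ, {t : ℂ | s ^ (j + 1) * t ^ (2 * (j + 1)) = 1}) ∪
      ⋃ j : ℕ, {t : ℂ | x ^ 2 * s ^ (2 * j) * t ^ (2 + 4 * j) = 1}) : Set ℂ).Countable := by
    refine (Set.countable_singleton 0).union ((Set.countable_iUnion fun j => ?_).union
      (Set.countable_iUnion fun j => ?_))
    · exact countable_setOf_mul_pow_eq_one _ (by omega)
    · exact countable_setOf_mul_pow_eq_one _ (by omega)
  have hd := hc.dense_compl ℝ
  refine (mem_closure_iff_frequently.1 (hd 1)).mono fun t ht => ?_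
  simp only [Set.mem_compl_iff, Set.mem_union, Set.mem_singleton_iff, Set.mem_iUnion,
    Set.mem_ofPred_eq, not_or, not_exists] at ht
  obtain ⟨h0, h1, h2⟩ := ht
  refine ⟨h0, fun j hj h => ?_, fun j h => h2 j ?_⟩
  · obtain ⟨j, rfl⟩ := Nat.exists_eq_succ_of_ne_zero hj
    exact h1 j (by rw [← h, Nat.succ_eq_add_one]; ring)
  · rw [← h]; ring

theorem q_gosper_related_extension (ℓ n : ℕ) (q x s : ℂ) (hs : s ^ 2 = q)
    (hq : q ≠ 0) (hx : x ≠ 0) (hx1 : 1 + x ≠ 0)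
    (hden : ∀ k ≤ n,
      qpoch q q k * qpoch (-1) q k * qpoch (s * q ^ (-(ℓ : ℤ))) q k * qpoch (-s) q k *
        qpoch (q ^ (-(3*n : ℤ))) q k ≠ 0)
    (hdenℓ : qpoch (q * x^2) q ℓ * qpoch s q ℓ ≠ 0)
    (hdeni : ∀ i ≤ ℓ, qpoch q q i * qpoch (x^2 * q^(ℓ+1)) q i ≠ 0)
    (hden2 : qpoch q (q^3) n * qpoch (q^2) (q^3) n ≠ 0) :
    ∑ k ∈ Finset.range (n+1),
      qpoch (q ^ (-(3*n : ℤ))) (q^3) k *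
        (qpoch x q k * qpoch (q ^ (-(ℓ : ℤ)) / x) q k) /
        (qpoch q q k * qpoch (-1) q k * qpoch (s * q ^ (-(ℓ : ℤ))) q k * qpoch (-s) q k *
          qpoch (q ^ (-(3*n : ℤ))) q k) * q^k
      = (qpoch (q*x) q ℓ * qpoch (s*x) q ℓ) / (qpoch (q * x^2) q ℓ * qpoch s q ℓ) *
        ∑ i ∈ Finset.range (ℓ+1),
          (q^(ℓ*i) * s^i) * ((1 + x * q^i) / (2 * (1 + x))) *
            (qpoch (q ^ (-(ℓ : ℤ))) q i * qpoch (x^2) q i) /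
            (qpoch q q i * qpoch (x^2 * q^(ℓ+1)) q i) *
            ((qpoch (q^(1+i)*x) (q^3) n * qpoch (q ^ (2 - i : ℤ) / x) (q^3) n) /
                (qpoch q (q^3) n * qpoch (q^2) (q^3) n)
              + (qpoch (q^(2+i)*x) (q^3) n * qpoch (q ^ (1 - i : ℤ) / x) (q^3) n) /
                (qpoch q (q^3) n * qpoch (q^2) (q^3) n)) := by
  have hs0 : s ≠ 0 := fun h => hq (by rw [← hs, h]; ring)
  subst hs
  have c1 : ContinuousAt (fun t : ℂ => s * t ^ 2) 1 := by fun_prop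
  have c2 : ContinuousAt (fun t : ℂ => (s * t ^ 2) ^ 2) 1 := by fun_prop
  have c3 : ContinuousAt (fun t : ℂ => x * t) 1 := by fun_prop
  have cL := continuousAt_gosperLhs c2 c3 c1 ℓ n (by simpa using hs0) (by simpa using hx)
    (by simpa only [one_pow, mul_one] using hden)
  have cR := continuousAt_gosperRhs c2 c3 c1 ℓ n (by simpa using hs0) (by simpa using hx)
    (by simpa using hx1) (by simpa only [one_pow, mul_one] using hdenℓ)
    (by simpa only [one_pow, mul_one] using hdeni) (by simpa only [one_pow, mul_one] using hden2)
  have heq := tendsto_nhds_unique_of_frequently_eq cL cR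
    ((frequently_generic s x).mono fun t ⟨ht0, ht1, ht2⟩ =>
      gosperLhs_eq_gosperRhs_of_generic ℓ n (mul_ne_zero hs0 (pow_ne_zero 2 ht0)) ht1
        (mul_ne_zero hx ht0) ht2)
  simp only [one_pow, mul_one] at heq
  exact heq
end
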